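/- Let f : ℝ^n → ℝ^n be locally Lipschitz with f(0) = 0 and such that ẋ = f(x) has unique, forward and backward complete solutions, with flow Φ_f. Let V_a, V_b : ℝ^n → ℝ be locally Lipschitz with V_a nonnegative, and fix ρ > 0 and τ̄ > 0. If there exist μ ∈ (0,1) and ν ∈ ℝ such that (i) V_b(x) ≤ μ V_a(x) for all x ∈ ℝ^n, (ii) D⁺_f V_b(x) ≤ ν V_b(x) for all x ∈ ℝ^n, and (iii) log(μ) + τ̄ (ν + ρ) ≤ 0, then V_b(Φ_f(τ, x)) ≤ e^{−ρτ} V_a(x) for all x ∈ ℝ^n and all τ ∈ [0, τ̄]. -/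

import Mathlib

open Filter Set
open scoped Classical

noncomputable section

/-- The Dini derivative of `V` along the flow `Φ` of a vector field:
`D⁺_f V(x) := limsup_{h→0⁺} (V(Φ(h,x)) − V(x))/h`. -/
def diniDeriv {E : Type*} (Φ : ℝ → E → E) (V : E → ℝ) (x : E) : ℝ :=
  Filter.limsup (fun h : ℝ => (V (Φ h x) - V x) / h) (nhdsWithin 0 (Ioi 0))

/-!
Along an orbit the Dini derivative of `V_b` is the upper right derivative of
`t ↦ V_b(Φ(t, x))`, so Grönwall's inequality gives `V_b(Φ(τ, x)) ≤ e^{ντ} V_b(x) ≤ μ e^{ντ} V_a(x)`.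
The condition `log μ + τ (ν + ρ) ≤ 0`, i.e. `μ e^{ντ} ≤ e^{-ρτ}`, is affine in `τ` and holds at both
ends of `[0, τ̄]`, hence on all of it.
-/

open Asymptotics Topology

lemma mul_exp_le_exp_of_log_add_mul_nonpos {μ ν ρ T τ : ℝ} (hμ : μ ∈ Ioc (0 : ℝ) 1)
    (hT : Real.log μ + T * (ν + ρ) ≤ 0) (hτ : τ ∈ Icc 0 T) :
    μ * Real.exp (ν * τ) ≤ Real.exp (-ρ * τ) := by
  have hlog : Real.log μ ≤ 0 := Real.log_nonpos hμ.1.le hμ.2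
  have hlog_add : Real.log μ + τ * (ν + ρ) ≤ 0 := by
    rcases le_total (ν + ρ) 0 with hneg | hpos
    · exact add_nonpos hlog (mul_nonpos_of_nonneg_of_nonpos hτ.1 hneg)
    · exact (add_le_add_right (mul_le_mul_of_nonneg_right hτ.2 hpos) _).trans hT
  calc μ * Real.exp (ν * τ) = Real.exp (Real.log μ + ν * τ) := by
        rw [Real.exp_add, Real.exp_log hμ.1]
    _ ≤ Real.exp (-ρ * τ) := Real.exp_le_exp.2 (by linarith)

lemma isBigO_sub_comp_of_locallyLipschitz {E F : Type*} [NormedAddCommGroup E] [NormedSpace ℝ E]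
    [SeminormedAddCommGroup F] {V : E → F} {γ : ℝ → E} {t : ℝ} (hV : LocallyLipschitz V)
    (hγ : DifferentiableAt ℝ γ t) :
    (fun s => V (γ s) - V (γ t)) =O[𝓝 t] fun s => s - t := by
  obtain ⟨K, U, hU, hVU⟩ := hV (γ t)
  have hLip : (fun s => V (γ s) - V (γ t)) =O[𝓝 t] fun s => γ s - γ t := by
    refine .of_bound K ?_
    filter_upwards [hγ.continuousAt hU] with s hs
    simpa only [dist_eq_norm] using hVU.dist_le_mul _ hs _ (mem_of_mem_nhds hU)
  exact hLip.trans hγ.isBigO_sub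

lemma isBoundedUnder_le_slope_of_isBigO_sub {g : ℝ → ℝ} {t : ℝ} {l : Filter ℝ}
    (hg : (fun s => g s - g t) =O[l] fun s => s - t) :
    IsBoundedUnder (· ≤ ·) l (slope g t) := by
  have hquot : IsBoundedUnder (· ≤ ·) l fun s => |(g s - g t) / (s - t)| :=
    div_isBoundedUnder_of_isBigO hg
  simpa only [← slope_def_field] using (isBoundedUnder_le_abs.1 hquot).1

/-- The real-valued `limsup` takes the junk value `0` when the slopes are unbounded above. -/
lemma le_mul_exp_of_limsup_slope_le {g : ℝ → ℝ} {K a b : ℝ} (hg : ContinuousOn g (Icc a b))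
    (hbdd : ∀ t ∈ Ico a b, IsBoundedUnder (· ≤ ·) (𝓝[>] t) (slope g t))
    (hslope : ∀ t ∈ Ico a b, limsup (slope g t) (𝓝[>] t) ≤ K * g t) :
    ∀ t ∈ Icc a b, g t ≤ g a * Real.exp (K * (t - a)) := by
  intro t ht
  have hfreq : ∀ s ∈ Ico a b, ∀ r, K * g s < r → ∃ᶠ z in 𝓝[>] s, slope g s z < r :=
    fun s hs r hr =>
      (eventually_lt_of_limsup_lt ((hslope s hs).trans_lt hr) (hbdd s hs)).frequently
  simpa only [gronwallBound_ε0] using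
    le_gronwallBound_of_liminf_deriv_right_le (δ := g a) (K := K) (ε := 0) hg hfreq le_rfl
      (fun _ _ => (add_zero _).ge) t ht

lemma diniDeriv_orbit_eq_limsup_slope {E : Type*} {Φ : ℝ → E → E}
    (hΦ_add : ∀ t h x, Φ (t + h) x = Φ h (Φ t x)) (V : E → ℝ) (x : E) (t : ℝ) :
    diniDeriv Φ V (Φ t x) = limsup (slope (fun s => V (Φ s x)) t) (𝓝[>] t) := by
  have hmap : map (t + ·) (𝓝[>] (0 : ℝ)) = 𝓝[>] t := by
    rw [map_add_left_nhdsGT, add_zero]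
  have hquot : (fun h => (V (Φ h (Φ t x)) - V (Φ t x)) / h) =
      slope (fun s => V (Φ s x)) t ∘ (t + ·) := by
    funext h
    simp only [Function.comp_apply, slope_def_field, hΦ_add, add_sub_cancel_left]
  rw [diniDeriv, hquot, limsup_comp, hmap]

section Flow

variable {E : Type*} [NormedAddCommGroup E] [NormedSpace ℝ E] {Φ : ℝ → E → E}

lemma flow_add_of_unique {f : E → E}
    (hode : ∀ x t, HasDerivAt (fun s => Φ s x) (f (Φ t x)) t)
    (huniq : ∀ γ : ℝ → E, (∀ t, HasDerivAt γ (f (γ t)) t) → ∀ t, γ t = Φ t (γ 0))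
    (t h : ℝ) (x : E) : Φ (t + h) x = Φ h (Φ t x) := by
  simpa only [add_zero] using
    huniq (fun s => Φ (t + s) x) (fun s => (hode x (t + s)).comp_const_add t s) h

theorem le_mul_exp_of_diniDeriv_le (hΦ0 : ∀ x, Φ 0 x = x)
    (hΦ_add : ∀ t h x, Φ (t + h) x = Φ h (Φ t x))
    (hΦ_diff : ∀ x, Differentiable ℝ fun t => Φ t x) {V : E → ℝ} (hV : LocallyLipschitz V)
    {ν : ℝ} (hdini : ∀ x, diniDeriv Φ V x ≤ ν * V x) (x : E) {τ : ℝ} (hτ : 0 ≤ τ) :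
    V (Φ τ x) ≤ V x * Real.exp (ν * τ) := by
  have hcont : Continuous fun t => V (Φ t x) := hV.continuous.comp (hΦ_diff x).continuous
  have hbdd (t : ℝ) : IsBoundedUnder (· ≤ ·) (𝓝[>] t) (slope (fun s => V (Φ s x)) t) :=
    isBoundedUnder_le_slope_of_isBigO_sub
      ((isBigO_sub_comp_of_locallyLipschitz hV (hΦ_diff x t)).mono nhdsWithin_le_nhds)
  have hslope (t : ℝ) : limsup (slope (fun s => V (Φ s x)) t) (𝓝[>] t) ≤ ν * V (Φ t x) :=
    diniDeriv_orbit_eq_limsup_slope hΦ_add V x t ▸ hdini (Φ t x)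
  simpa only [hΦ0, sub_zero] using
    le_mul_exp_of_limsup_slope_le hcont.continuousOn (fun t _ => hbdd t) (fun t _ => hslope t)
      τ (right_mem_Icc.2 hτ)

theorem dini_comparison_lemma_general (hΦ0 : ∀ x, Φ 0 x = x)
    (hΦ_add : ∀ t h x, Φ (t + h) x = Φ h (Φ t x))
    (hΦ_diff : ∀ x, Differentiable ℝ fun t => Φ t x) {Va Vb : E → ℝ}
    (hVb : LocallyLipschitz Vb) (hVa : ∀ x, 0 ≤ Va x) {ρ T μ ν : ℝ} (hμ : μ ∈ Ioc (0 : ℝ) 1)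
    (hle : ∀ x, Vb x ≤ μ * Va x) (hdini : ∀ x, diniDeriv Φ Vb x ≤ ν * Vb x)
    (hT : Real.log μ + T * (ν + ρ) ≤ 0) (x : E) {τ : ℝ} (hτ : τ ∈ Icc 0 T) :
    Vb (Φ τ x) ≤ Real.exp (-ρ * τ) * Va x :=
  calc Vb (Φ τ x) ≤ Vb x * Real.exp (ν * τ) :=
        le_mul_exp_of_diniDeriv_le hΦ0 hΦ_add hΦ_diff hVb hdini x hτ.1
    _ ≤ μ * Va x * Real.exp (ν * τ) := by gcongr; exact hle x
    _ = μ * Real.exp (ν * τ) * Va x := mul_right_comm _ _ _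
    _ ≤ Real.exp (-ρ * τ) * Va x := by
        gcongr
        exacts [hVa x, mul_exp_le_exp_of_log_add_mul_nonpos hμ hT hτ]

end Flow

/-- Lemma 3: comparison-type estimate. If `V_b ≤ μ V_a`, the Dini
derivative of `V_b` along `f` satisfies `D⁺_f V_b ≤ ν V_b`, and
`log μ + τ̄ (ν + ρ) ≤ 0`, then `V_b(Φ(τ,x)) ≤ e^{−ρτ} V_a(x)` for all `τ ∈ [0, τ̄]`. -/
theorem dini_comparison_lemma {n : ℕ}
    (f : EuclideanSpace ℝ (Fin n) → EuclideanSpace ℝ (Fin n))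
    (Φ : ℝ → EuclideanSpace ℝ (Fin n) → EuclideanSpace ℝ (Fin n))
    (hlip : LocallyLipschitz f) (hf0 : f 0 = 0)
    (hΦ0 : ∀ x, Φ 0 x = x)
    (hode : ∀ x t, HasDerivAt (fun s => Φ s x) (f (Φ t x)) t)
    (huniq : ∀ γ : ℝ → EuclideanSpace ℝ (Fin n),
      (∀ t, HasDerivAt γ (f (γ t)) t) → ∀ t, γ t = Φ t (γ 0))
    (Va Vb : EuclideanSpace ℝ (Fin n) → ℝ)
    (hVaLip : LocallyLipschitz Va) (hVbLip : LocallyLipschitz Vb)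
    (hVaNonneg : ∀ x, 0 ≤ Va x)
    (ρ : ℝ) (hρ : 0 < ρ) (τbar : ℝ) (hτbar : 0 < τbar)
    (μ : ℝ) (hμ : μ ∈ Ioo (0 : ℝ) 1) (ν : ℝ)
    (h1 : ∀ x, Vb x ≤ μ * Va x)
    (h2 : ∀ x, diniDeriv Φ Vb x ≤ ν * Vb x)
    (h3 : Real.log μ + τbar * (ν + ρ) ≤ 0) :
    ∀ x, ∀ τ ∈ Icc (0 : ℝ) τbar, Vb (Φ τ x) ≤ Real.exp (-ρ * τ) * Va x := by
  exact fun x _ hτ => dini_comparison_lemma_general hΦ0 (flow_add_of_unique hode huniq)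
    (fun y t => (hode y t).differentiableAt) hVbLip hVaNonneg (Ioo_subset_Ioc_self hμ) h1 h2 h3 x hτ
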